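/- arXiv:1501.05888 — 3 statements merged into one kernel-verified Lean document; each statement's English description precedes it below -/
import Mathlib

section
/- Let (t_k)_{k ∈ ℤ} be a strictly increasing real sequence with t_{k+1} - t_k ≥ η > 0 for all k. Let (γ_k)_{k ∈ ℤ} be a real sequence with γ_k ≥ γ_L > -1 for all k and ∏_{i=n}^{k}(1+γ_i) ≤ Γ_M for all n ≤ k. Let a : ℝ → ℝ be continuous with a(r) ≥ a_L > 0 for all r. Define H(t,s) = (∏_{k ∈ ℤ, s ≤ t_k < t} (1+γ_k)) · exp(-∫_s^t a(r) dr) for s ≤ t. Let 0 < ε₁ < ε < η/2, ω ∈ ℝ and p ∈ ℤ satisfy: |a(r+ω) - a(r)| ≤ ε for all r ∈ ℝ, |γ_{k+p} - γ_k| ≤ ε for all k ∈ ℤ, and |t_{k+p} - t_k - ω| ≤ ε₁ for all k ∈ ℤ. Set M = max{ 2/a_L, Γ_M [ 2/a_L + (1/(1+γ_L)) (1 + 2/(a_L η)) ] }. Then for all s ≤ t such that |t - t_k| > ε and |s - t_k| > ε for every k ∈ ℤ, one has |H(t+ω, s+ω) - H(t,s)| ≤ ε M e^{-a_L (t-s)/2}.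 -/
/-- The Cauchy function `H(t,s)` of the linear impulsive equation
`ẏ = -a(t) y`, `Δy(t_k) = γ_k y(t_k⁻)`: for `s ≤ x` it is the product of `(1+γ_k)`
over all impulse points `t_k ∈ [s, x)` times `exp(-∫_s^x a(r) dr)`. -/
noncomputable def cauchyH (t γ : ℤ → ℝ) (a : ℝ → ℝ) (x s : ℝ) : ℝ :=
  (∏ᶠ (k : ℤ) (_ : s ≤ t k ∧ t k < x), (1 + γ k)) * Real.exp (-∫ r in s..x, a r)

/-!
After translating time by `ω` and the indices by `p`, both Cauchy functions have the same impulse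
points in `[s, x)`, because `s` and `x` keep a distance more than `ε` from all of them. Both are
positive and at most `C = G e^{-aL (x - s)}`, where `G = ΓM`, or `G = 1` if there is no impulse
(`ΓM` need not bound the empty product, hence the maximum in the estimate). So they differ by at
most `C` times the difference of their logarithms, to which each of the at most `1 + (x - s)/η`
impulses contributes at most `ε/(1 + γL)`, and the integral at most `ε (x - s)`. One half of the
exponential decay absorbs the growth in `x - s`.
-/

open Set MeasureTheory

section Logarithm

variable {x y c : ℝ}

theorem abs_sub_le_mul_abs_log_sub_log (hx : 0 < x) (hy : 0 < y) (hxc : x ≤ c) (hyc : y ≤ c) :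
    |x - y| ≤ c * |Real.log x - Real.log y| := by
  wlog h : y ≤ x generalizing x y with H
  · rw [abs_sub_comm, abs_sub_comm (Real.log x)]
    exact H hy hx hyc hxc (le_of_not_ge h)
  rw [abs_of_nonneg (sub_nonneg.2 h), abs_of_nonneg (sub_nonneg.2 (Real.log_le_log hy h)),
    ← Real.log_div hx.ne' hy.ne']
  calc x - y = x * (1 - (x / y)⁻¹) := by field_simp
    _ ≤ x * Real.log (x / y) := by gcongr; exact Real.one_sub_inv_le_log_of_pos (div_pos hx hy)
    _ ≤ c * Real.log (x / y) := by gcongr; exact Real.log_nonneg ((one_le_div hy).2 h)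

theorem abs_log_sub_log_le_div (hc : 0 < c) (hx : c ≤ x) (hy : c ≤ y) :
    |Real.log x - Real.log y| ≤ |x - y| / c := by
  wlog h : y ≤ x generalizing x y with H
  · rw [abs_sub_comm, abs_sub_comm x]
    exact H hy hx (le_of_not_ge h)
  have hy₀ : 0 < y := hc.trans_le hy
  have hx₀ : 0 < x := hc.trans_le hx
  rw [abs_of_nonneg (sub_nonneg.2 h), abs_of_nonneg (sub_nonneg.2 (Real.log_le_log hy₀ h)),
    ← Real.log_div hx₀.ne' hy₀.ne']
  calc Real.log (x / y) ≤ x / y - 1 := Real.log_le_sub_one_of_pos (div_pos hx₀ hy₀)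
    _ = (x - y) / y := by field_simp
    _ ≤ (x - y) / c := div_le_div_of_nonneg_left (sub_nonneg.2 h) hc hy

theorem abs_log_prod_sub_log_prod_le {ι : Type*} {S : Finset ι} {f g : ι → ℝ} {e : ℝ}
    (hc : 0 < c) (hf : ∀ i ∈ S, c ≤ f i) (hg : ∀ i ∈ S, c ≤ g i)
    (hfg : ∀ i ∈ S, |f i - g i| ≤ e) :
    |Real.log (∏ i ∈ S, f i) - Real.log (∏ i ∈ S, g i)| ≤ S.card * (e / c) := by
  rw [Real.log_prod fun i hi ↦ (hc.trans_le (hf i hi)).ne',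
    Real.log_prod fun i hi ↦ (hc.trans_le (hg i hi)).ne', ← Finset.sum_sub_distrib,
    ← nsmul_eq_mul]
  refine (Finset.abs_sum_le_sum_abs _ _).trans (Finset.sum_le_card_nsmul _ _ _ fun i hi ↦ ?_)
  calc |Real.log (f i) - Real.log (g i)| ≤ |f i - g i| / c :=
        abs_log_sub_log_le_div hc (hf i hi) (hg i hi)
    _ ≤ e / c := by gcongr; exact hfg i hi

end Logarithm

section Decay

variable {b : ℝ}

theorem mul_exp_neg_mul_le (hb : 0 < b) (x : ℝ) :
    x * Real.exp (-b * x) ≤ 2 / b * Real.exp (-b * x / 2) := by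
  have hhalf : b * x / 2 * Real.exp (-(b * x / 2)) ≤ 1 :=
    (Real.mul_exp_neg_le_exp_neg_one _).trans (Real.exp_le_one_iff.2 (by norm_num))
  have hsplit : Real.exp (-b * x) = Real.exp (-(b * x / 2)) * Real.exp (-b * x / 2) := by
    rw [← Real.exp_add]
    ring_nf
  calc x * Real.exp (-b * x)
      = 2 / b * (b * x / 2 * Real.exp (-(b * x / 2))) * Real.exp (-b * x / 2) := by
        rw [hsplit]
        field_simp
    _ ≤ 2 / b * 1 * Real.exp (-b * x / 2) := by gcongr
    _ = 2 / b * Real.exp (-b * x / 2) := by rw [mul_one]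

theorem one_add_div_mul_exp_neg_mul_le {η x : ℝ} (hb : 0 < b) (hη : 0 < η) (hx : 0 ≤ x) :
    (1 + x / η) * Real.exp (-b * x) ≤ (1 + 2 / (b * η)) * Real.exp (-b * x / 2) := by
  have hexp : Real.exp (-b * x) ≤ Real.exp (-b * x / 2) :=
    Real.exp_le_exp.2 (by linarith [mul_nonneg hb.le hx])
  calc (1 + x / η) * Real.exp (-b * x)
      = Real.exp (-b * x) + x * Real.exp (-b * x) / η := by ring
    _ ≤ Real.exp (-b * x / 2) + 2 / b * Real.exp (-b * x / 2) / η :=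
        add_le_add hexp (div_le_div_of_nonneg_right (mul_exp_neg_mul_le hb x) hη.le)
    _ = (1 + 2 / (b * η)) * Real.exp (-b * x / 2) := by field_simp

theorem exp_neg_mul_mul_affine_le {η x c e : ℝ} (hb : 0 < b) (hη : 0 < η) (hx : 0 ≤ x)
    (hc : 0 < c) (he : 0 ≤ e) :
    Real.exp (-b * x) * ((1 + x / η) * (e / c) + e * x)
      ≤ e * (2 / b + 1 / c * (1 + 2 / (b * η))) * Real.exp (-b * x / 2) := by
  have hlin := mul_exp_neg_mul_le hb x
  have haff := one_add_div_mul_exp_neg_mul_le hb hη hx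
  calc Real.exp (-b * x) * ((1 + x / η) * (e / c) + e * x)
      = e * (x * Real.exp (-b * x) + 1 / c * ((1 + x / η) * Real.exp (-b * x))) := by ring
    _ ≤ e * (2 / b * Real.exp (-b * x / 2)
          + 1 / c * ((1 + 2 / (b * η)) * Real.exp (-b * x / 2))) := by gcongr
    _ = e * (2 / b + 1 / c * (1 + 2 / (b * η))) * Real.exp (-b * x / 2) := by ring

end Decay

theorem mul_sub_le_intervalIntegral {f : ℝ → ℝ} {m u v : ℝ} (huv : u ≤ v)
    (hf : IntervalIntegrable f volume u v) (hm : ∀ r ∈ Icc u v, m ≤ f r) :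
    m * (v - u) ≤ ∫ r in u..v, f r := by
  simpa only [intervalIntegral.integral_const, smul_eq_mul, mul_comm (v - u)]
    using intervalIntegral.integral_mono_on huv intervalIntegrable_const hf hm

section ImpulseTimes

variable {K : Type*} [Field K] [LinearOrder K] [IsStrictOrderedRing K] {t : ℤ → K} {η s x : K}

theorem sub_mul_le_sub_of_gap (hgap : ∀ k, η ≤ t (k + 1) - t k) {j k : ℤ} (hjk : j ≤ k) :
    ((k : K) - j) * η ≤ t k - t j := by
  have hmono : Monotone fun k : ℤ ↦ t k - k * η := monotone_int_of_le_succ fun k ↦ by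
    push_cast
    linarith [hgap k]
  linarith [hmono hjk]

theorem sub_le_div_of_gap (hη : 0 < η) (hgap : ∀ k, η ≤ t (k + 1) - t k) {j k : ℤ}
    (hj : t j ∈ Ico s x) (hk : t k ∈ Ico s x) : (k : K) - j ≤ (x - s) / η := by
  rw [le_div_iff₀ hη]
  rcases le_total j k with hjk | hkj
  · linarith [sub_mul_le_sub_of_gap hgap hjk, hj.1, hk.2]
  · have : ((k : K) - j) * η ≤ 0 :=
      mul_nonpos_of_nonpos_of_nonneg (sub_nonpos.2 (Int.cast_le.2 hkj)) hη.le
    linarith [hj.1, hj.2]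

theorem exists_preimage_Ico_eq_Icc_of_gap [FloorRing K] (hη : 0 < η)
    (hgap : ∀ k, η ≤ t (k + 1) - t k) (hne : (t ⁻¹' Ico s x).Nonempty) :
    ∃ m n : ℤ, m ≤ n ∧ t ⁻¹' Ico s x = Icc m n := by
  have hmono : Monotone t := monotone_int_of_le_succ fun k ↦ by linarith [hgap k]
  have hdist {j k : ℤ} (hj : t j ∈ Ico s x) (hk : t k ∈ Ico s x) : k - j ≤ ⌊(x - s) / η⌋ :=
    Int.le_floor.2 (by push_cast; exact sub_le_div_of_gap hη hgap hj hk)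
  obtain ⟨i, hi⟩ := id hne
  have hbelow : BddBelow (t ⁻¹' Ico s x) :=
    ⟨i - ⌊(x - s) / η⌋, fun k hk ↦ by linarith [hdist hk hi]⟩
  have habove : BddAbove (t ⁻¹' Ico s x) :=
    ⟨i + ⌊(x - s) / η⌋, fun k hk ↦ by linarith [hdist hi hk]⟩
  exact ⟨_, _, csInf_le_csSup hne hbelow habove,
    (hne.ordConnected_iff_of_bdd hbelow habove).1 (ordConnected_Ico.preimage_mono hmono)⟩

theorem card_Icc_le_of_gap (hη : 0 < η) (hgap : ∀ k, η ≤ t (k + 1) - t k) {m n : ℤ} (hmn : m ≤ n)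
    (hm : t m ∈ Ico s x) (hn : t n ∈ Ico s x) :
    ((Finset.Icc m n).card : K) ≤ 1 + (x - s) / η := by
  have hcard : ((Finset.Icc m n).card : K) = n + 1 - m := by
    exact_mod_cast congrArg (Int.cast : ℤ → K) (Int.card_Icc_of_le m n (by lia))
  linarith [sub_le_div_of_gap hη hgap hm hn]

theorem add_le_iff_of_abs_sub_le {u v ω ε : K} (huv : |v - u - ω| ≤ ε) (hs : ε < |s - u|) :
    s + ω ≤ v ↔ s ≤ u := by
  have hv := abs_le.1 huv
  rcases lt_abs.1 hs with hus | hsu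
  · exact iff_of_false (by linarith) (by linarith)
  · exact iff_of_true (by linarith) (by linarith)

end ImpulseTimes

section Comparison

variable {t γ γ' : ℤ → ℝ} {a a' : ℝ → ℝ} {s x : ℝ} {S : Finset ℤ}

theorem cauchyH_eq_prod_mul_exp (hS : t ⁻¹' Ico s x = S) :
    cauchyH t γ a x s = (∏ k ∈ S, (1 + γ k)) * Real.exp (-∫ r in s..x, a r) := by
  rw [← finprod_mem_coe_finset, ← hS]
  rfl

theorem cauchyH_add_add {ω ε : ℝ} {p : ℤ} (ht : ∀ k, |t (k + p) - t k - ω| ≤ ε)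
    (hx : ∀ k, ε < |x - t k|) (hs : ∀ k, ε < |s - t k|) :
    cauchyH t γ a (x + ω) (s + ω)
      = cauchyH t (fun k ↦ γ (k + p)) (fun r ↦ a (r + ω)) x s := by
  have hmem (k : ℤ) : (s + ω ≤ t (k + p) ∧ t (k + p) < x + ω) ↔ (s ≤ t k ∧ t k < x) := by
    rw [add_le_iff_of_abs_sub_le (ht k) (hs k), ← not_le,
      add_le_iff_of_abs_sub_le (ht k) (hx k), not_le]
  unfold cauchyH
  rw [intervalIntegral.integral_comp_add_right, ← finprod_comp_equiv (Equiv.addRight p)]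
  simp only [Equiv.coe_addRight, hmem]

theorem cauchyH_le {G b : ℝ} (hS : t ⁻¹' Ico s x = S) (hγ : ∀ k ∈ S, 0 ≤ 1 + γ k)
    (hG : ∏ k ∈ S, (1 + γ k) ≤ G) (hsx : s ≤ x) (ha : IntervalIntegrable a volume s x)
    (hb : ∀ r ∈ Icc s x, b ≤ a r) : cauchyH t γ a x s ≤ G * Real.exp (-b * (x - s)) := by
  have hint := mul_sub_le_intervalIntegral hsx ha hb
  have hprod : 0 ≤ ∏ k ∈ S, (1 + γ k) := Finset.prod_nonneg hγ
  rw [cauchyH_eq_prod_mul_exp hS]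
  gcongr
  · exact hprod.trans hG
  · linarith

theorem abs_log_cauchyH_sub_log_cauchyH_le {c d e : ℝ} (hS : t ⁻¹' Ico s x = S) (hc : 0 < c)
    (hγ : ∀ k ∈ S, c ≤ 1 + γ k) (hγ' : ∀ k ∈ S, c ≤ 1 + γ' k) (hd : ∀ k ∈ S, |γ k - γ' k| ≤ d)
    (hsx : s ≤ x) (ha : IntervalIntegrable a volume s x) (ha' : IntervalIntegrable a' volume s x)
    (he : ∀ r ∈ Ioc s x, |a r - a' r| ≤ e) :
    |Real.log (cauchyH t γ a x s) - Real.log (cauchyH t γ' a' x s)|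
      ≤ S.card * (d / c) + e * (x - s) := by
  have hlog := abs_log_prod_sub_log_prod_le hc hγ hγ' fun k hk ↦ by
    simpa only [add_sub_add_left_eq_sub] using hd k hk
  have hint : |(∫ r in s..x, a' r) - ∫ r in s..x, a r| ≤ e * (x - s) := by
    rw [← intervalIntegral.integral_sub ha' ha, ← abs_of_nonneg (sub_nonneg.2 hsx)]
    exact intervalIntegral.norm_integral_le_of_norm_le_const (f := fun r ↦ a' r - a r)
      fun r hr ↦ (abs_sub_comm _ _).trans_le (he r (by rwa [uIoc_of_le hsx] at hr))
  have hprod (δ : ℤ → ℝ) (hδ : ∀ k ∈ S, c ≤ 1 + δ k) : ∏ k ∈ S, (1 + δ k) ≠ 0 :=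
    (Finset.prod_pos fun k hk ↦ hc.trans_le (hδ k hk)).ne'
  rw [cauchyH_eq_prod_mul_exp hS, cauchyH_eq_prod_mul_exp hS,
    Real.log_mul (hprod γ hγ) (Real.exp_ne_zero _),
    Real.log_mul (hprod γ' hγ') (Real.exp_ne_zero _), Real.log_exp, Real.log_exp,
    add_sub_add_comm, neg_sub_neg]
  exact (abs_add_le _ _).trans (add_le_add hlog hint)

theorem abs_cauchyH_sub_cauchyH_le {G b c d e : ℝ} (hS : t ⁻¹' Ico s x = S) (hc : 0 < c)
    (hγ : ∀ k ∈ S, c ≤ 1 + γ k) (hγ' : ∀ k ∈ S, c ≤ 1 + γ' k) (hd : ∀ k ∈ S, |γ k - γ' k| ≤ d)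
    (hG : ∏ k ∈ S, (1 + γ k) ≤ G) (hG' : ∏ k ∈ S, (1 + γ' k) ≤ G)
    (hsx : s ≤ x) (ha : IntervalIntegrable a volume s x) (ha' : IntervalIntegrable a' volume s x)
    (hb : ∀ r ∈ Icc s x, b ≤ a r) (hb' : ∀ r ∈ Icc s x, b ≤ a' r)
    (he : ∀ r ∈ Ioc s x, |a r - a' r| ≤ e) :
    |cauchyH t γ a x s - cauchyH t γ' a' x s|
      ≤ G * Real.exp (-b * (x - s)) * (S.card * (d / c) + e * (x - s)) := by
  have hpos (δ : ℤ → ℝ) (f : ℝ → ℝ) (hδ : ∀ k ∈ S, c ≤ 1 + δ k) : 0 < cauchyH t δ f x s := by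
    rw [cauchyH_eq_prod_mul_exp hS]
    exact mul_pos (Finset.prod_pos fun k hk ↦ hc.trans_le (hδ k hk)) (Real.exp_pos _)
  have hle := cauchyH_le hS (fun k hk ↦ hc.le.trans (hγ k hk)) hG hsx ha hb
  have hle' := cauchyH_le hS (fun k hk ↦ hc.le.trans (hγ' k hk)) hG' hsx ha' hb'
  refine (abs_sub_le_mul_abs_log_sub_log (hpos γ a hγ) (hpos γ' a' hγ') hle hle').trans ?_
  exact mul_le_mul_of_nonneg_left
    (abs_log_cauchyH_sub_log_cauchyH_le hS hc hγ hγ' hd hsx ha ha' he)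
    ((hpos γ a hγ).le.trans hle)

theorem abs_cauchyH_sub_cauchyH_le_of_gap {η b c e G : ℝ} (hη : 0 < η)
    (hgap : ∀ k, η ≤ t (k + 1) - t k) (hc : 0 < c)
    (hγ : ∀ k, c ≤ 1 + γ k) (hγ' : ∀ k, c ≤ 1 + γ' k) (heγ : ∀ k, |γ k - γ' k| ≤ e)
    (hG : ∀ m n, m ≤ n → ∏ k ∈ Finset.Icc m n, (1 + γ k) ≤ G)
    (hG' : ∀ m n, m ≤ n → ∏ k ∈ Finset.Icc m n, (1 + γ' k) ≤ G)
    (hsx : s ≤ x) (ha : IntervalIntegrable a volume s x) (ha' : IntervalIntegrable a' volume s x)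
    (hb₀ : 0 < b) (hb : ∀ r ∈ Icc s x, b ≤ a r) (hb' : ∀ r ∈ Icc s x, b ≤ a' r)
    (hea : ∀ r ∈ Ioc s x, |a r - a' r| ≤ e) :
    |cauchyH t γ a x s - cauchyH t γ' a' x s|
      ≤ e * max (2 / b) (G * (2 / b + 1 / c * (1 + 2 / (b * η)))) *
        Real.exp (-b * (x - s) / 2) := by
  have he : 0 ≤ e := (abs_nonneg _).trans (heγ 0)
  have hcompare (S : Finset ℤ) (C : ℝ) (hS : t ⁻¹' Ico s x = S)
      (hC : ∏ k ∈ S, (1 + γ k) ≤ C) (hC' : ∏ k ∈ S, (1 + γ' k) ≤ C) :=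
    abs_cauchyH_sub_cauchyH_le hS hc (fun k _ ↦ hγ k) (fun k _ ↦ hγ' k) (fun k _ ↦ heγ k) hC hC'
      hsx ha ha' hb hb' hea
  rcases (t ⁻¹' Ico s x).eq_empty_or_nonempty with hempty | hne
  · calc |cauchyH t γ a x s - cauchyH t γ' a' x s|
        ≤ 1 * Real.exp (-b * (x - s)) * ((∅ : Finset ℤ).card * (e / c) + e * (x - s)) :=
          hcompare ∅ 1 (by rw [hempty, Finset.coe_empty]) Finset.prod_empty.le Finset.prod_empty.le
      _ = e * ((x - s) * Real.exp (-b * (x - s))) := by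
          rw [Finset.card_empty]
          push_cast
          ring
      _ ≤ e * (2 / b * Real.exp (-b * (x - s) / 2)) :=
          mul_le_mul_of_nonneg_left (mul_exp_neg_mul_le hb₀ (x - s)) he
      _ ≤ _ := by
          rw [← mul_assoc]
          gcongr
          exact le_max_left _ _
  · obtain ⟨m, n, hmn, hS⟩ := exists_preimage_Ico_eq_Icc_of_gap hη hgap hne
    have hG₀ : 0 ≤ G := (Finset.prod_nonneg fun k _ ↦ hc.le.trans (hγ k)).trans (hG m n hmn)
    have hcard := card_Icc_le_of_gap hη hgap hmn (hS.ge (left_mem_Icc.2 hmn))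
      (hS.ge (right_mem_Icc.2 hmn))
    calc |cauchyH t γ a x s - cauchyH t γ' a' x s|
        ≤ G * Real.exp (-b * (x - s)) * ((Finset.Icc m n).card * (e / c) + e * (x - s)) :=
          hcompare _ G (by rw [hS, Finset.coe_Icc]) (hG m n hmn) (hG' m n hmn)
      _ ≤ G * (Real.exp (-b * (x - s)) * ((1 + (x - s) / η) * (e / c) + e * (x - s))) := by
          rw [mul_assoc]
          gcongr
      _ ≤ G * (e * (2 / b + 1 / c * (1 + 2 / (b * η))) * Real.exp (-b * (x - s) / 2)) :=
          mul_le_mul_of_nonneg_left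
            (exp_neg_mul_mul_affine_le hb₀ hη (sub_nonneg.2 hsx) hc he) hG₀
      _ = e * (G * (2 / b + 1 / c * (1 + 2 / (b * η)))) * Real.exp (-b * (x - s) / 2) := by ring
      _ ≤ _ := by
          gcongr
          exact le_max_right _ _

end Comparison

theorem cauchy_function_almost_periodicity_general
    (t : ℤ → ℝ) (η : ℝ) (hη : 0 < η) (hgap : ∀ k : ℤ, η ≤ t (k + 1) - t k)
    (γ : ℤ → ℝ) (γL ΓM : ℝ) (hγL : -1 < γL) (hγ : ∀ k : ℤ, γL ≤ γ k)
    (hΓM : ∀ n k : ℤ, n ≤ k → ∏ i ∈ Finset.Icc n k, (1 + γ i) ≤ ΓM)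
    (a : ℝ → ℝ) (ha : LocallyIntegrable a) (aL : ℝ) (haL : 0 < aL) (haL' : ∀ r : ℝ, aL ≤ a r)
    (ε ω : ℝ) (p : ℤ)
    (hapa : ∀ r : ℝ, |a (r + ω) - a r| ≤ ε)
    (hapγ : ∀ k : ℤ, |γ (k + p) - γ k| ≤ ε)
    (hapt : ∀ k : ℤ, |t (k + p) - t k - ω| ≤ ε) (s x : ℝ) (hsx : s ≤ x)
    (hx : ∀ k : ℤ, ε < |x - t k|) (hs : ∀ k : ℤ, ε < |s - t k|) :
    |cauchyH t γ a (x + ω) (s + ω) - cauchyH t γ a x s|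
      ≤ ε * max (2 / aL) (ΓM * (2 / aL + 1 / (1 + γL) * (1 + 2 / (aL * η)))) *
        Real.exp (-aL * (x - s) / 2) := by
  have hint (u v : ℝ) : IntervalIntegrable a volume u v :=
    (ha.integrableOn_isCompact isCompact_uIcc).intervalIntegrable
  have hint' : IntervalIntegrable (fun r ↦ a (r + ω)) volume s x := by
    simpa only [add_sub_cancel_right] using (hint (s + ω) (x + ω)).comp_add_right ω
  have hΓM' (n k : ℤ) (hnk : n ≤ k) : ∏ i ∈ Finset.Icc n k, (1 + γ (i + p)) ≤ ΓM := by
    have hshift := hΓM (n + p) (k + p) (add_le_add_left hnk p)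
    rwa [← Finset.map_add_right_Icc, Finset.prod_map] at hshift
  have hγ₁ (k : ℤ) : 1 + γL ≤ 1 + γ k := add_le_add_right (hγ k) 1
  rw [cauchyH_add_add hapt hx hs]
  exact abs_cauchyH_sub_cauchyH_le_of_gap hη hgap (neg_lt_iff_pos_add'.1 hγL)
    (fun k ↦ hγ₁ (k + p)) hγ₁ hapγ hΓM' hΓM hsx hint' (hint s x) haL
    (fun r _ ↦ haL' (r + ω)) (fun r _ ↦ haL' r) fun r _ ↦ hapa r

/-- Lemma 2.7: almost-periodicity estimate for the Cauchy function. If `ω` is a common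
`ε`-almost period of `a`, of `(γ_k)` (with shift `p`) and `ε₁`-almost period of the
impulse times, then `|H(t+ω, s+ω) - H(t,s)| ≤ ε M e^{-a_L(t-s)/2}` for all `s ≤ t`
staying at distance more than `ε` from every impulse point, where
`M = max{2/a_L, Γ_M [2/a_L + (1/(1+γ_L))(1 + 2/(a_L η))]}`. -/
theorem cauchy_function_almost_periodicity
    (t : ℤ → ℝ) (ht : StrictMono t) (η : ℝ) (hη : 0 < η)
    (hgap : ∀ k : ℤ, η ≤ t (k + 1) - t k)
    (γ : ℤ → ℝ) (γL ΓM : ℝ) (hγL : -1 < γL) (hγ : ∀ k : ℤ, γL ≤ γ k)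
    (hΓM : ∀ n k : ℤ, n ≤ k → ∏ i ∈ Finset.Icc n k, (1 + γ i) ≤ ΓM)
    (a : ℝ → ℝ) (ha : Continuous a) (aL : ℝ) (haL : 0 < aL) (haL' : ∀ r : ℝ, aL ≤ a r)
    (ε ε₁ : ℝ) (hε₁ : 0 < ε₁) (hε₁ε : ε₁ < ε) (hεη : ε < η / 2)
    (ω : ℝ) (p : ℤ)
    (hapa : ∀ r : ℝ, |a (r + ω) - a r| ≤ ε)
    (hapγ : ∀ k : ℤ, |γ (k + p) - γ k| ≤ ε)
    (hapt : ∀ k : ℤ, |t (k + p) - t k - ω| ≤ ε₁)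
    (M : ℝ) (hM : M = max (2 / aL) (ΓM * (2 / aL + 1 / (1 + γL) * (1 + 2 / (aL * η))))) :
    ∀ s x : ℝ, s ≤ x → (∀ k : ℤ, ε < |x - t k|) → (∀ k : ℤ, ε < |s - t k|) →
      |cauchyH t γ a (x + ω) (s + ω) - cauchyH t γ a x s|
        ≤ ε * M * Real.exp (-aL * (x - s) / 2) := by
  subst hM
  exact cauchy_function_almost_periodicity_general t η hη hgap γ γL ΓM hγL hγ hΓM a
    ha.locallyIntegrable aL haL haL' ε ω p hapa hapγ fun k ↦ (hapt k).trans hε₁ε.le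
end

section
/- Let (t_k)_{k ∈ ℤ} be a strictly increasing real sequence with t_{k+1} - t_k ≥ η > 0, let (γ_k)_{k ∈ ℤ} satisfy 0 < Γ_L ≤ ∏_{i=n}^{k}(1+γ_i) ≤ Γ_M for all n ≤ k, let a : ℝ → ℝ be continuous with 0 < a_L ≤ a(r) ≤ a_M, and define H(t,s) = (∏_{k : s ≤ t_k < t}(1+γ_k)) exp(-∫_s^t a(r) dr) for s ≤ t and A = max(Γ_M, 1). Let m ≥ 1, let α_i, β_i > 0, T > 0, and for i = 1,…,m let b_i, c_i : ℝ → ℝ be nonnegative with b_i(s) ≤ b_{iM}, c_i(s) ≤ c_{iM}; let v_i : [0,T] → ℝ be nonnegative integrable with ∫_0^T v_i(r) dr = 1; let H_i : ℝ × [0,∞) → ℝ satisfy 0 ≤ H_{iL} ≤ H_i(s,x) for all s ∈ ℝ, x ≥ 0; let τ_i, σ_i : ℝ → [0,∞); and let (δ_k)_{k ∈ ℤ} satisfy δ_k ≤ δ_M with δ_M ≥ 0. Let φ : ℝ → ℝ be nonnegative and define g(s) = Σ_{i=1}^m [ b_i(s)/(1 + φ(s - τ_i(s))^{α_i}) + c_i(s)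 ∫_0^T v_i(r)/(1 + φ(s - r)^{β_i}) dr - H_i(s, φ(s - σ_i(s))) ]. Assume C := Σ_{i=1}^m (b_{iM} + c_{iM} - H_{iL}) ≥ 0 and that s ↦ H(t,s) g(s) is integrable on (-∞, t]. Then ∫_{-∞}^t H(t,s) g(s) ds + Σ_{k : t_k < t} H(t, t_k) δ_k ≤ (A/a_L) C + A δ_M/(1 - e^{-a_L η}). -/
open MeasureTheory

/-!
Since any product of consecutive `1 + γ k` is at most `max ΓM 1` and `a ≥ aL`, the Cauchy function
is at most `max ΓM 1 * exp (-aL * (x - s))`. Hence a forcing bounded by `C` contributes at most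
`max ΓM 1 * C * ∫ s ≤ x, exp (-aL * (x - s)) = max ΓM 1 * C / aL`. As the impulse times are
`η`-separated, the integers `⌊(x - t k) / η⌋` are distinct, so the impulses are dominated by the
geometric series with ratio `exp (-aL * η)`.
-/

section Separated

variable {ι : Type*} {t : ι → ℝ} {η : ℝ}

theorem finite_preimage_Ico_of_separated (hη : 0 < η)
    (hsep : Pairwise fun i j => η ≤ dist (t i) (t j)) (s x : ℝ) : (t ⁻¹' Set.Ico s x).Finite := by
  let _ : TopologicalSpace ι := ⊥
  have : DiscreteTopology ι := ⟨rfl⟩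
  have ht : Topology.IsClosedEmbedding t := Metric.isClosedEmbedding_of_pairwise_le_dist hη hsep
  exact (ht.isCompact_preimage isCompact_Icc).finite_of_discrete.subset
    (Set.preimage_mono Set.Ico_subset_Icc_self)

theorem injective_floor_div_of_separated (hη : 0 < η)
    (hsep : Pairwise fun i j => η ≤ dist (t i) (t j)) {x : ℝ} (ht : ∀ i, t i ≤ x) :
    Function.Injective fun i => ⌊(x - t i) / η⌋₊ := by
  intro i j hij
  by_contra hne
  have hnonneg : ∀ k, 0 ≤ (x - t k) / η := fun k => div_nonneg (sub_nonneg.2 (ht k)) hη.le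
  have hfloor : ⌊(x - t j) / η⌋ = ⌊(x - t i) / η⌋ := by
    rw [← Int.natCast_floor_eq_floor (hnonneg i), ← Int.natCast_floor_eq_floor (hnonneg j)]
    exact_mod_cast hij.symm
  have hlt : |(t i - t j) / η| < 1 := by
    rw [show (t i - t j) / η = (x - t j) / η - (x - t i) / η by ring]
    exact Int.abs_sub_lt_one_of_floor_eq_floor hfloor
  rw [abs_div, abs_of_pos hη, div_lt_one hη] at hlt
  exact hlt.not_ge (hsep hne)

theorem exp_neg_mul_le_pow_floor_div {κ y : ℝ} (hκ : 0 ≤ κ) (hη : 0 < η) (hy : 0 ≤ y) :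
    Real.exp (-κ * y) ≤ Real.exp (-κ * η) ^ ⌊y / η⌋₊ := by
  have hfloor : ⌊y / η⌋₊ * η ≤ y := (le_div_iff₀ hη).1 (Nat.floor_le (div_nonneg hy hη.le))
  rw [← Real.exp_nat_mul, Real.exp_le_exp]
  linarith [mul_le_mul_of_nonneg_left hfloor hκ]

theorem exp_neg_mul_lt_one {κ : ℝ} (hκ : 0 < κ) (hη : 0 < η) :
    Real.exp (-κ * η) < 1 :=
  Real.exp_lt_one_iff.2 (mul_neg_of_neg_of_pos (neg_neg_of_pos hκ) hη)

theorem sum_exp_neg_mul_sub_le_of_separated {κ x : ℝ} (hκ : 0 < κ) (hη : 0 < η)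
    (hsep : Pairwise fun i j => η ≤ dist (t i) (t j)) (ht : ∀ i, t i ≤ x) (F : Finset ι) :
    ∑ i ∈ F, Real.exp (-κ * (x - t i)) ≤ (1 - Real.exp (-κ * η))⁻¹ := by
  have hq : Real.exp (-κ * η) < 1 := exp_neg_mul_lt_one hκ hη
  calc ∑ i ∈ F, Real.exp (-κ * (x - t i))
      ≤ ∑ i ∈ F, Real.exp (-κ * η) ^ ⌊(x - t i) / η⌋₊ :=
        Finset.sum_le_sum fun i _ =>
          exp_neg_mul_le_pow_floor_div hκ.le hη (sub_nonneg.2 (ht i))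
    _ = ∑ n ∈ F.map ⟨_, injective_floor_div_of_separated hη hsep ht⟩, Real.exp (-κ * η) ^ n := by
        simp only [Finset.sum_map, Function.Embedding.coeFn_mk]
    _ ≤ ∑' n : ℕ, Real.exp (-κ * η) ^ n :=
        (summable_geometric_of_lt_one (Real.exp_nonneg _) hq).sum_le_tsum _
          fun _ _ => by positivity
    _ = (1 - Real.exp (-κ * η))⁻¹ := tsum_geometric_of_lt_one (Real.exp_nonneg _) hq

theorem tsum_le_of_le_exp_of_separated {κ x K : ℝ} (hκ : 0 < κ) (hη : 0 < η) (hK : 0 ≤ K)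
    (hsep : Pairwise fun i j => η ≤ dist (t i) (t j)) (ht : ∀ i, t i ≤ x) {f : ι → ℝ}
    (hf : ∀ i, f i ≤ K * Real.exp (-κ * (x - t i))) :
    ∑' i, f i ≤ K / (1 - Real.exp (-κ * η)) := by
  -- `f` need not be bounded below, so the series may diverge; its `tsum` is then `0`.
  refine tsum_le_of_sum_le'
    (div_nonneg hK (sub_nonneg.2 (exp_neg_mul_lt_one hκ hη).le)) fun F => ?_
  calc ∑ i ∈ F, f i ≤ ∑ i ∈ F, K * Real.exp (-κ * (x - t i)) :=
        Finset.sum_le_sum fun i _ => hf i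
    _ = K * ∑ i ∈ F, Real.exp (-κ * (x - t i)) := (Finset.mul_sum ..).symm
    _ ≤ K * (1 - Real.exp (-κ * η))⁻¹ :=
        mul_le_mul_of_nonneg_left (sum_exp_neg_mul_sub_le_of_separated hκ hη hsep ht F) hK
    _ = K / (1 - Real.exp (-κ * η)) := (div_eq_mul_inv _ _).symm

end Separated

theorem pairwise_le_dist_of_le_sub {t : ℤ → ℝ} {η : ℝ} (ht : Monotone t)
    (hgap : ∀ k : ℤ, η ≤ t (k + 1) - t k) : Pairwise fun i j => η ≤ dist (t i) (t j) := by
  have hlt : ∀ {i j : ℤ}, i < j → η ≤ dist (t i) (t j) := fun {i j} hij => by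
    rw [dist_comm, Real.dist_eq]
    linarith [hgap i, ht (Int.add_one_le_of_lt hij), le_abs_self (t j - t i)]
  intro i j hij
  rcases hij.lt_or_gt with h | h
  · exact hlt h
  · exact dist_comm (t i) (t j) ▸ hlt h

theorem finprod_mem_le_max_of_prod_Icc_le {ι R : Type*} [LinearOrder ι] [LocallyFiniteOrder ι]
    [CommMonoid R] [LinearOrder R] {f : ι → R} {M : R} {S : Set ι}
    (hf : ∀ n k, n ≤ k → ∏ i ∈ Finset.Icc n k, f i ≤ M) (hS : S.Finite)
    (hconn : S.OrdConnected) : ∏ᶠ i ∈ S, f i ≤ max M 1 := by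
  lift S to Finset ι using hS
  rw [finprod_mem_coe_finset]
  rcases S.eq_empty_or_nonempty with rfl | hne
  · exact le_max_right _ _
  · have hIcc : S = Finset.Icc (S.min' hne) (S.max' hne) := Finset.ext fun i =>
      ⟨fun hi => Finset.mem_Icc.2 ⟨S.min'_le i hi, S.le_max' i hi⟩,
        fun hi => hconn.out (S.min'_mem hne) (S.max'_mem hne) (Finset.mem_Icc.1 hi)⟩
    calc ∏ i ∈ S, f i = ∏ i ∈ Finset.Icc (S.min' hne) (S.max' hne), f i :=
          congrArg (fun F => ∏ i ∈ F, f i) hIcc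
      _ ≤ M := hf _ _ (S.min'_le_max' hne)
      _ ≤ max M 1 := le_max_left _ _

theorem setIntegral_Iic_le_of_le_exp {κ x K : ℝ} (hκ : 0 < κ) {f : ℝ → ℝ}
    (hint : IntegrableOn f (Set.Iic x))
    (hf : ∀ s ≤ x, f s ≤ K * Real.exp (-κ * (x - s))) :
    ∫ s in Set.Iic x, f s ≤ K / κ := by
  have hexp : ∀ s, K * Real.exp (-κ * (x - s)) =
      K * Real.exp (-(κ * x)) * Real.exp (κ * s) := fun s => by
    rw [mul_assoc, ← Real.exp_add]
    ring_nf
  calc ∫ s in Set.Iic x, f s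
      ≤ ∫ s in Set.Iic x, K * Real.exp (-(κ * x)) * Real.exp (κ * s) :=
        setIntegral_mono_on hint ((integrableOn_exp_mul_Iic hκ x).const_mul _)
          measurableSet_Iic fun s hs => (hf s hs).trans_eq (hexp s)
    _ = K * (Real.exp (-(κ * x)) * Real.exp (κ * x)) / κ := by
        rw [integral_const_mul, integral_exp_mul_Iic hκ]
        ring
    _ = K / κ := by rw [← Real.exp_add, neg_add_cancel, Real.exp_zero, mul_one]

theorem div_one_add_le_self {b p : ℝ} (hb : 0 ≤ b) (hp : 0 ≤ p) : b / (1 + p) ≤ b :=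
  div_le_self hb (le_add_of_nonneg_right hp)

theorem intervalIntegral_div_one_add_le {μ : Measure ℝ} {l u : ℝ} {v q : ℝ → ℝ} (hlu : l ≤ u)
    (hv : ∀ r ∈ Set.Icc l u, 0 ≤ v r) (hvint : IntervalIntegrable v μ l u)
    (hq : ∀ r ∈ Set.Icc l u, 0 ≤ q r) :
    ∫ r in l..u, v r / (1 + q r) ∂μ ≤ ∫ r in l..u, v r ∂μ := by
  rw [intervalIntegral.integral_of_le hlu, intervalIntegral.integral_of_le hlu]
  have hmem : ∀ᵐ r ∂μ.restrict (Set.Ioc l u), r ∈ Set.Icc l u :=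
    (ae_restrict_mem measurableSet_Ioc).mono fun _ hr => Set.Ioc_subset_Icc_self hr
  refine integral_mono_of_nonneg ?_ hvint.1 ?_
  · exact hmem.mono fun r hr => div_nonneg (hv r hr) (add_nonneg zero_le_one (hq r hr))
  · exact hmem.mono fun r hr => div_one_add_le_self (hv r hr) (hq r hr)

theorem production_sub_loss_le {T b bM c cM h hL p : ℝ} {v q : ℝ → ℝ} (hb : 0 ≤ b)
    (hbM : b ≤ bM) (hc : 0 ≤ c) (hcM : c ≤ cM) (hT : 0 ≤ T) (hv : ∀ r ∈ Set.Icc 0 T, 0 ≤ v r)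
    (hvint : IntervalIntegrable v volume 0 T) (hv1 : ∫ r in 0..T, v r ≤ 1) (hh : hL ≤ h)
    (hp : 0 ≤ p) (hq : ∀ r ∈ Set.Icc 0 T, 0 ≤ q r) :
    b / (1 + p) + c * (∫ r in 0..T, v r / (1 + q r)) - h ≤ bM + cM - hL := by
  have hinstant : b / (1 + p) ≤ bM := (div_one_add_le_self hb hp).trans hbM
  have hdelayed : c * (∫ r in 0..T, v r / (1 + q r)) ≤ cM :=
    (mul_le_of_le_one_right hc
      ((intervalIntegral_div_one_add_le hT hv hvint hq).trans hv1)).trans hcM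
  exact sub_le_sub (add_le_add hinstant hdelayed) hh

section CauchyFunction

variable {t γ : ℤ → ℝ} {a : ℝ → ℝ}

theorem cauchyH_nonneg (hγ : ∀ k, 0 ≤ 1 + γ k) (x s : ℝ) : 0 ≤ cauchyH t γ a x s :=
  mul_nonneg (finprod_nonneg fun k => finprod_nonneg fun _ => hγ k) (Real.exp_nonneg _)

theorem cauchyH_le_s9 {η ΓM aL x s : ℝ} (hη : 0 < η) (ht : Monotone t)
    (hsep : Pairwise fun i j => η ≤ dist (t i) (t j))
    (hΓ : ∀ n k : ℤ, n ≤ k → ∏ i ∈ Finset.Icc n k, (1 + γ i) ≤ ΓM)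
    (ha : LocallyIntegrable a) (haL : ∀ r, aL ≤ a r) (hsx : s ≤ x) :
    cauchyH t γ a x s ≤ max ΓM 1 * Real.exp (-aL * (x - s)) := by
  have hprod : ∏ᶠ (k : ℤ) (_ : s ≤ t k ∧ t k < x), (1 + γ k) ≤ max ΓM 1 :=
    finprod_mem_le_max_of_prod_Icc_le (S := t ⁻¹' Set.Ico s x) hΓ
      (finite_preimage_Ico_of_separated hη hsep s x) (Set.ordConnected_Ico.preimage_mono ht)
  have hintegral : aL * (x - s) ≤ ∫ r in s..x, a r := by
    calc aL * (x - s) = ∫ _ in s..x, aL := by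
          rw [intervalIntegral.integral_const, smul_eq_mul, mul_comm]
      _ ≤ ∫ r in s..x, a r :=
          intervalIntegral.integral_mono_on hsx intervalIntegrable_const
            (ha.integrableOn_isCompact isCompact_uIcc).intervalIntegrable fun r _ => haL r
  exact mul_le_mul hprod (Real.exp_le_exp.2 (by linarith)) (Real.exp_nonneg _)
    (zero_le_one.trans (le_max_right _ _))

theorem operator_upper_bound_general {η ΓM aL δM C x : ℝ} {δ : ℤ → ℝ} {g : ℝ → ℝ} (hη : 0 < η)
    (hgap : ∀ k : ℤ, η ≤ t (k + 1) - t k) (hγ : ∀ k, 0 ≤ 1 + γ k)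
    (hΓ : ∀ n k : ℤ, n ≤ k → ∏ i ∈ Finset.Icc n k, (1 + γ i) ≤ ΓM)
    (ha : LocallyIntegrable a) (haL_pos : 0 < aL) (haL : ∀ r, aL ≤ a r)
    (hδM : 0 ≤ δM) (hδ : ∀ k, δ k ≤ δM) (hC : 0 ≤ C) (hg : ∀ s ≤ x, g s ≤ C)
    (hint : IntegrableOn (fun s => cauchyH t γ a x s * g s) (Set.Iic x)) :
    (∫ s in Set.Iic x, cauchyH t γ a x s * g s)
      + (∑' k : {k : ℤ // t k < x}, cauchyH t γ a x (t k) * δ k)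
      ≤ max ΓM 1 / aL * C + max ΓM 1 * δM / (1 - Real.exp (-aL * η)) := by
  have ht : Monotone t := monotone_int_of_le_succ fun k => by linarith [hgap k]
  have hsep := pairwise_le_dist_of_le_sub ht hgap
  have hbound : ∀ {s y B : ℝ}, s ≤ x → y ≤ B → 0 ≤ B →
      cauchyH t γ a x s * y ≤ max ΓM 1 * B * Real.exp (-aL * (x - s)) := fun hs hy hB =>
    (mul_le_mul_of_nonneg (cauchyH_le_s9 hη ht hsep hΓ ha haL hs) hy
      (cauchyH_nonneg hγ _ _) hB).trans_eq (mul_right_comm _ _ _)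
  refine add_le_add ?_ ?_
  · rw [div_mul_eq_mul_div]
    exact setIntegral_Iic_le_of_le_exp haL_pos hint fun s hs => hbound hs (hg s hs) hC
  · exact tsum_le_of_le_exp_of_separated haL_pos hη (by positivity)
      (hsep.comp_of_injective Subtype.val_injective) (fun k => k.2.le)
      fun k => hbound k.2.le (hδ k) hδM

end CauchyFunction

/-- Upper bound `Fφ(t) ≤ M₁` of Lemma 3.1: for the fixed-point operator
`Fφ(t) = ∫_{-∞}^t H(t,s) g(s) ds + Σ_{t_k < t} H(t,t_k) δ_k` of the impulsive
hematopoiesis model, one has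
`Fφ(t) ≤ (A/a_L) Σᵢ (b_{iM}+c_{iM}-H_{iL}) + A δ_M/(1-e^{-a_L η})`. -/
theorem operator_upper_bound
    (t : ℤ → ℝ) (ht : StrictMono t) (η : ℝ) (hη : 0 < η)
    (hgap : ∀ k : ℤ, η ≤ t (k + 1) - t k)
    (γ : ℤ → ℝ) (ΓL ΓM : ℝ) (hΓL : 0 < ΓL)
    (hΓ : ∀ n k : ℤ, n ≤ k →
      ΓL ≤ ∏ i ∈ Finset.Icc n k, (1 + γ i) ∧ ∏ i ∈ Finset.Icc n k, (1 + γ i) ≤ ΓM)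
    (a : ℝ → ℝ) (ha : Continuous a) (aL aM : ℝ) (haL : 0 < aL)
    (hab : ∀ r : ℝ, aL ≤ a r ∧ a r ≤ aM)
    (A : ℝ) (hA : A = max ΓM 1)
    (m : ℕ) (hm : 1 ≤ m)
    (α β : Fin m → ℝ) (hα : ∀ i, 0 < α i) (hβ : ∀ i, 0 < β i)
    (T : ℝ) (hT : 0 < T)
    (b c : Fin m → ℝ → ℝ) (bM cM : Fin m → ℝ)
    (hb : ∀ i s, 0 ≤ b i s ∧ b i s ≤ bM i)
    (hc : ∀ i s, 0 ≤ c i s ∧ c i s ≤ cM i)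
    (v : Fin m → ℝ → ℝ) (hv : ∀ i, ∀ r ∈ Set.Icc (0 : ℝ) T, 0 ≤ v i r)
    (hvint : ∀ i, IntervalIntegrable (v i) volume 0 T)
    (hv1 : ∀ i, ∫ r in (0 : ℝ)..T, v i r = 1)
    (Hh : Fin m → ℝ → ℝ → ℝ) (HL : Fin m → ℝ) (hHL0 : ∀ i, 0 ≤ HL i)
    (hHh : ∀ i s x, 0 ≤ x → HL i ≤ Hh i s x)
    (τd σd : Fin m → ℝ → ℝ) (hτd : ∀ i s, 0 ≤ τd i s) (hσd : ∀ i s, 0 ≤ σd i s)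
    (δ : ℤ → ℝ) (δM : ℝ) (hδM : 0 ≤ δM) (hδ : ∀ k, δ k ≤ δM)
    (φ : ℝ → ℝ) (hφ : ∀ s, 0 ≤ φ s)
    (g : ℝ → ℝ)
    (hg : ∀ s, g s = ∑ i, (b i s / (1 + φ (s - τd i s) ^ α i)
        + c i s * (∫ r in (0 : ℝ)..T, v i r / (1 + φ (s - r) ^ β i))
        - Hh i s (φ (s - σd i s))))
    (C : ℝ) (hC : C = ∑ i, (bM i + cM i - HL i)) (hC0 : 0 ≤ C)
    (x : ℝ)
    (hint : IntegrableOn (fun s => cauchyH t γ a x s * g s) (Set.Iic x)) :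
    (∫ s in Set.Iic x, cauchyH t γ a x s * g s)
      + (∑' k : {k : ℤ // t k < x}, cauchyH t γ a x (t k) * δ k)
      ≤ A / aL * C + A * δM / (1 - Real.exp (-aL * η)) := by
  have hγ : ∀ k, 0 ≤ 1 + γ k := fun k =>
    hΓL.le.trans ((hΓ k k le_rfl).1.trans_eq (by rw [Finset.Icc_self, Finset.prod_singleton]))
  have hgC : ∀ s, g s ≤ C := fun s => by
    rw [hg, hC]
    exact Finset.sum_le_sum fun i _ =>
      production_sub_loss_le (hb i s).1 (hb i s).2 (hc i s).1 (hc i s).2 hT.le (hv i) (hvint i)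
        (hv1 i).le (hHh i s _ (hφ _)) (Real.rpow_nonneg (hφ _) _)
        fun _ _ => Real.rpow_nonneg (hφ _) _
  rw [hA]
  exact operator_upper_bound_general hη hgap hγ (fun n k hnk => (hΓ n k hnk).2)
    ha.locallyIntegrable haL (fun r => (hab r).1) hδM hδ hC0 (fun s _ => hgC s) hint
end

section
/- Let (t_k)_{k ∈ ℤ} be a strictly increasing real sequence with t_{k+1} - t_k ≥ η for all k ∈ ℤ, where η > 0. Then for every α > 0, every c ≥ 0, every ε with 0 ≤ ε ≤ η/2, and every t ∈ ℝ, Σ_{k : t_k < t} e^{-α(t - t_k - ε)} (t - t_k + c) ≤ e^{αη/2} (c + 2/α) · 1/(1 - e^{-αη/2}). -/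
/-!
For `i` with `t i < x`, put `y i = x - t i`. Since `y * exp (-(α / 2) * y) ≤ 2 / α`, half of the
exponential decay absorbs the weight `y i + c`, and a sum of `exp (-(α / 2) * y i)` remains. The
points `y i ≥ 0` are `η`-separated, so every interval `[n * η, (n + 1) * η)` contains at most one of
them, and the sum is dominated term by term by the geometric series of ratio `exp (-(α / 2) * η)`.
-/

open Real Function

theorem pairwise_le_abs_sub_of_le_gap {t : ℤ → ℝ} {η : ℝ} (ht : Monotone t)
    (hgap : ∀ k, η ≤ t (k + 1) - t k) : Pairwise fun k l => η ≤ |t k - t l| := by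
  have le_sub_of_lt {k l : ℤ} (hkl : k < l) : η ≤ t l - t k :=
    (hgap k).trans (sub_le_sub_right (ht (Int.add_one_le_of_lt hkl)) _)
  intro k l hkl
  rcases hkl.lt_or_gt with h | h
  · exact abs_sub_comm (t l) (t k) ▸ (le_sub_of_lt h).trans (le_abs_self _)
  · exact (le_sub_of_lt h).trans (le_abs_self _)

section Separated

variable {ι : Type*} {y : ι → ℝ} {η β : ℝ}

theorem natFloor_div_injective_of_separated (hη : 0 < η) (hy : ∀ i, 0 ≤ y i)
    (hsep : Pairwise fun i j => η ≤ |y i - y j|) : Injective fun i => ⌊y i / η⌋₊ := by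
  intro i j hij
  have floor_eq : ⌊y i / η⌋ = ⌊y j / η⌋ := by
    rw [← Int.natCast_floor_eq_floor (div_nonneg (hy i) hη.le),
      ← Int.natCast_floor_eq_floor (div_nonneg (hy j) hη.le)]
    exact congrArg Nat.cast hij
  have abs_sub_lt : |y i - y j| < η := by
    simpa only [← sub_div, abs_div, abs_of_pos hη, div_lt_one hη]
      using Int.abs_sub_lt_one_of_floor_eq_floor floor_eq
  by_contra hne
  exact abs_sub_lt.not_ge (hsep hne)

theorem exp_neg_mul_le_pow_natFloor_div {a : ℝ} (hβ : 0 ≤ β) (hη : 0 < η) (ha : 0 ≤ a) :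
    exp (-β * a) ≤ exp (-β * η) ^ ⌊a / η⌋₊ := by
  have floor_mul_le : ⌊a / η⌋₊ * η ≤ a := (le_div_iff₀ hη).1 (Nat.floor_le (by positivity))
  rw [← exp_nat_mul, exp_le_exp]
  linarith [mul_le_mul_of_nonneg_left floor_mul_le hβ]

theorem summable_exp_neg_mul_of_separated (hβ : 0 < β) (hη : 0 < η) (hy : ∀ i, 0 ≤ y i)
    (hsep : Pairwise fun i j => η ≤ |y i - y j|) : Summable fun i => exp (-β * y i) := by
  have ratio_lt_one : exp (-β * η) < 1 := exp_lt_one_iff.2 (by nlinarith)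
  exact .of_nonneg_of_le (fun _ => (exp_pos _).le)
    (fun i => exp_neg_mul_le_pow_natFloor_div hβ.le hη (hy i))
    ((summable_geometric_of_lt_one (exp_pos _).le ratio_lt_one).comp_injective
      (natFloor_div_injective_of_separated hη hy hsep))

theorem tsum_exp_neg_mul_le_of_separated (hβ : 0 < β) (hη : 0 < η) (hy : ∀ i, 0 ≤ y i)
    (hsep : Pairwise fun i j => η ≤ |y i - y j|) :
    ∑' i, exp (-β * y i) ≤ 1 / (1 - exp (-β * η)) := by
  have ratio_lt_one : exp (-β * η) < 1 := exp_lt_one_iff.2 (by nlinarith)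
  calc ∑' i, exp (-β * y i) ≤ ∑' n : ℕ, exp (-β * η) ^ n :=
        (summable_exp_neg_mul_of_separated hβ hη hy hsep).tsum_le_tsum_of_inj _
          (natFloor_div_injective_of_separated hη hy hsep) (fun _ _ => by positivity)
          (fun i => exp_neg_mul_le_pow_natFloor_div hβ.le hη (hy i))
          (summable_geometric_of_lt_one (exp_pos _).le ratio_lt_one)
    _ = 1 / (1 - exp (-β * η)) := by
        rw [tsum_geometric_of_lt_one (exp_pos _).le ratio_lt_one, one_div]

end Separated

section WeightedExp

variable {α β c y ε : ℝ}

theorem exp_neg_mul_mul_self_le (hβ : 0 < β) : exp (-β * y) * y ≤ 1 / β := by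
  rw [le_div_iff₀ hβ, neg_mul, exp_neg, mul_assoc, inv_mul_le_iff₀ (exp_pos _)]
  linarith [add_one_le_exp (β * y)]

theorem exp_neg_mul_mul_add_le (hβ : 0 < β) (hc : 0 ≤ c) (hy : 0 ≤ y) :
    exp (-β * y) * (y + c) ≤ c + 1 / β := by
  have exp_le_one : exp (-β * y) ≤ 1 := exp_le_one_iff.2 (by nlinarith)
  linarith [exp_neg_mul_mul_self_le (y := y) hβ, mul_le_of_le_one_left hc exp_le_one]

theorem exp_neg_mul_sub_mul_add_le (hα : 0 < α) (hc : 0 ≤ c) (hy : 0 ≤ y) :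
    exp (-α * (y - ε)) * (y + c) ≤ exp (α * ε) * (c + 2 / α) * exp (-(α / 2) * y) := by
  have exp_split : exp (-α * (y - ε)) = exp (α * ε) * exp (-(α / 2) * y) * exp (-(α / 2) * y) := by
    rw [← exp_add, ← exp_add]
    ring_nf
  calc exp (-α * (y - ε)) * (y + c)
      = exp (α * ε) * (exp (-(α / 2) * y) * (y + c)) * exp (-(α / 2) * y) := by
        rw [exp_split]
        ring
    _ ≤ exp (α * ε) * (c + 2 / α) * exp (-(α / 2) * y) := by
        gcongr
        simpa only [one_div_div] using exp_neg_mul_mul_add_le (half_pos hα) hc hy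

end WeightedExp

theorem shifted_weighted_exp_sum_over_impulses_le_general {ι : Type*} {t : ι → ℝ} {η α c ε : ℝ}
    (hη : 0 < η) (hsep : Pairwise fun i j => η ≤ |t i - t j|) (hα : 0 < α) (hc : 0 ≤ c)
    (hεη : ε ≤ η / 2) (x : ℝ) :
    (Summable fun i : {i // t i < x} => exp (-α * (x - t i - ε)) * (x - t i + c)) ∧
      ∑' i : {i // t i < x}, exp (-α * (x - t i - ε)) * (x - t i + c)
        ≤ exp (α * η / 2) * (c + 2 / α) * (1 / (1 - exp (-α * η / 2))) := by
  have lag_nonneg (i : {i // t i < x}) : 0 ≤ x - t i := sub_nonneg.2 i.2.le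
  have lag_separated : Pairwise fun i j : {i // t i < x} => η ≤ |(x - t i) - (x - t j)| := by
    intro i j hij
    rw [sub_sub_sub_cancel_left]
    exact hsep (Subtype.coe_ne_coe.2 hij.symm)
  have term_le (i : {i // t i < x}) : exp (-α * (x - t i - ε)) * (x - t i + c) ≤
      exp (α * η / 2) * (c + 2 / α) * exp (-(α / 2) * (x - t i)) := by
    refine (exp_neg_mul_sub_mul_add_le hα hc (lag_nonneg i)).trans ?_
    rw [mul_div_assoc]
    gcongr
  have summable_bound :=
    (summable_exp_neg_mul_of_separated (half_pos hα) hη lag_nonneg lag_separated).mul_left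
      (exp (α * η / 2) * (c + 2 / α))
  have summable_terms := summable_bound.of_nonneg_of_le
    (fun i => mul_nonneg (exp_pos _).le (add_nonneg (lag_nonneg i) hc)) term_le
  refine ⟨summable_terms, (summable_terms.tsum_le_tsum term_le summable_bound).trans ?_⟩
  rw [tsum_mul_left, show -α * η / 2 = -(α / 2) * η by ring]
  gcongr
  exact tsum_exp_neg_mul_le_of_separated (half_pos hα) hη lag_nonneg lag_separated

/-- Inequality (48) in the proof of Theorem 3.1: if the impulse points `t_k` (k ∈ ℤ) are
strictly increasing with gaps at least `η > 0`, then for every `α > 0`, `c ≥ 0`,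
`0 ≤ ε ≤ η/2` and `t ∈ ℝ`,
`Σ_{t_k < t} e^{-α(t - t_k - ε)} (t - t_k + c) ≤ e^{αη/2} (c + 2/α) / (1 - e^{-αη/2})`. -/
theorem shifted_weighted_exp_sum_over_impulses_le
    (t : ℤ → ℝ) (ht : StrictMono t) (η : ℝ) (hη : 0 < η)
    (hgap : ∀ k : ℤ, η ≤ t (k + 1) - t k) (α : ℝ) (hα : 0 < α)
    (c : ℝ) (hcpos : 0 ≤ c) (ε : ℝ) (hε : 0 ≤ ε) (hεη : ε ≤ η / 2) (x : ℝ) :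
    ∑' k : {k : ℤ // t k < x}, Real.exp (-α * (x - t k - ε)) * (x - t k + c)
      ≤ Real.exp (α * η / 2) * (c + 2 / α) * (1 / (1 - Real.exp (-α * η / 2))) := by
  have hsep := pairwise_le_abs_sub_of_le_gap ht.monotone hgap
  exact (shifted_weighted_exp_sum_over_impulses_le_general hη hsep hα hcpos hεη x).2
end
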